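/- Corollary 4.2. Let ℰ = (𝒳, Σ, {P_θ}_{θ∈Θ}) be a statistical model, μ a σ-finite measure on (𝒳,Σ) with P_θ ≪ μ for every θ, and T : 𝒳 → (𝒯,Σ_𝒯) measurable. Suppose (𝒳,Σ) is an analytic Borel space and (𝒯,Σ_𝒯) is separable. For each θ ∈ Θ choose a density f_θ of P_θ with respect to μ. If there exists a nonempty countable subset Θ₀ ⊆ Θ that is dense in Θ with respect to the total variation pseudometric d_ℰ such that for all x, y ∈ 𝒳 with T(x) = T(y) one has y ∈ D(x,Θ₀), then T is sufficient. -/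

import Mathlib

open MeasureTheory

noncomputable section

universe u v w u'

/-- `f` is a (pointwise nonnegative, measurable) density of `P` w.r.t. `μ`,
i.e. a version of the Radon–Nikodym derivative `dP/dμ`. -/
def IsDensity {X : Type*} [MeasurableSpace X] (P μ : Measure X) (f : X → ℝ) : Prop :=
  Measurable f ∧ (∀ x, 0 ≤ f x) ∧ P = μ.withDensity (fun x => ENNReal.ofReal (f x))

/-- The proportionality set `D(x, Θ')` determined by a family of densities. -/
def DSet {X : Type*} {Θ : Type*} (f : Θ → X → ℝ) (x : X) (Θ' : Set Θ) : Set X :=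
  {y | ∃ h : ℝ, 0 < h ∧ ∀ θ ∈ Θ', f θ y = f θ x * h}

/-- A statistic `T` is sufficient for the model `{P θ}`. -/
def IsSufficientStat {X : Type u} [mX : MeasurableSpace X] {Θ : Type v}
    (P : Θ → Measure X) {T' : Type w} [mT : MeasurableSpace T'] (T : X → T') : Prop :=
  Measurable T ∧
  ∀ E : Set X, MeasurableSet E → ∃ κ : T' → ℝ, Measurable κ ∧
    ∀ θ : Θ, (P θ)[E.indicator (fun _ => (1 : ℝ)) | MeasurableSpace.comap T mT] =ᵐ[P θ] κ ∘ T

/-- A statistic `T` is minimal sufficient: it is sufficient and it factors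
`P θ`-a.e. (for every `θ`) through every sufficient statistic via a measurable map. -/
def IsMinimalSufficientStat {X : Type u} [mX : MeasurableSpace X] {Θ : Type v}
    (P : Θ → Measure X) {T' : Type w} [mT : MeasurableSpace T'] (T : X → T') : Prop :=
  IsSufficientStat P T ∧
  ∀ (S' : Type u') (mS : MeasurableSpace S') (S : X → S'),
    @IsSufficientStat X mX Θ P S' mS S →
      ∃ g : S' → T', @Measurable S' T' mS mT g ∧ ∀ θ : Θ, T =ᵐ[P θ] g ∘ S

/-- A measurable space is analytic Borel iff it is separable (countably generated with
measurable singletons) and it is the image of a standard Borel space under a surjective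
measurable map. -/
def IsAnalyticBorel (X : Type u) [mX : MeasurableSpace X] : Prop :=
  MeasurableSpace.CountablyGenerated X ∧ MeasurableSingletonClass X ∧
  ∃ (Y : Type u) (mY : MeasurableSpace Y), @StandardBorelSpace Y mY ∧
    ∃ g : Y → X, @Measurable Y X mY mX g ∧ Function.Surjective g

/-- A sub-σ-algebra `m ⊆ Σ` is sufficient for the model `{P θ}`. -/
def IsSufficientSubalgebra {X : Type u} [mX : MeasurableSpace X] {Θ : Type v}
    (P : Θ → Measure X) (m : MeasurableSpace X) : Prop :=
  m ≤ mX ∧ ∀ E : Set X, MeasurableSet[mX] E → ∃ κ : X → ℝ, Measurable[m] κ ∧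
    ∀ θ : Θ, (P θ)[E.indicator (fun _ => (1 : ℝ)) | m] =ᵐ[P θ] κ

/-- The collection `𝔑_ℰ` of measurable sets null under every `P θ`. -/
def modelNullSets {X : Type u} [mX : MeasurableSpace X] {Θ : Type v}
    (P : Θ → Measure X) : Set (Set X) :=
  {N | MeasurableSet N ∧ ∀ θ, P θ N = 0}

/-- The σ-algebra `𝔄̄^ℰ` generated by `𝔄 ∪ 𝔑_ℰ`. -/
def completionAlg {X : Type u} [mX : MeasurableSpace X] {Θ : Type v}
    (P : Θ → Measure X) (m : MeasurableSpace X) : MeasurableSpace X :=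
  MeasurableSpace.generateFrom ({s | MeasurableSet[m] s} ∪ @modelNullSets X mX Θ P)

/-- A sub-σ-algebra is minimal sufficient iff it is sufficient and contained in the
`𝔑_ℰ`-completion of every sufficient sub-σ-algebra. -/
def IsMinimalSufficientSubalgebra {X : Type u} [mX : MeasurableSpace X] {Θ : Type v}
    (P : Θ → Measure X) (m : MeasurableSpace X) : Prop :=
  @IsSufficientSubalgebra X mX Θ P m ∧
  ∀ m' : MeasurableSpace X, @IsSufficientSubalgebra X mX Θ P m' →
    m ≤ @completionAlg X mX Θ P m'

/-- The total variation distance `d_ℰ(θ₁, θ₂) = sup_{E ∈ Σ} |P θ₁ E - P θ₂ E|`. -/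
def tvDist {X : Type u} [MeasurableSpace X] {Θ : Type v} (P : Θ → Measure X)
    (θ₁ θ₂ : Θ) : ℝ :=
  ⨆ E : {E : Set X // MeasurableSet E}, |(P θ₁ E.1).toReal - (P θ₂ E.1).toReal|

/-- The coarsest topology `τ⟨ℰ⟩` on `Θ` making `θ ↦ P θ E` continuous for every `E ∈ Σ`. -/
def modelTopology {X : Type u} [MeasurableSpace X] {Θ : Type v} (P : Θ → Measure X) :
    TopologicalSpace Θ :=
  ⨅ E : {E : Set X // MeasurableSet E},
    TopologicalSpace.induced (fun θ => (P θ E.1).toReal) inferInstance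

/-!
On a countable dense set `Θ₀` of parameters let `ν` be a finite mixture `∑ c_θ P_θ` with positive
weights. The ratios `f_θ / ∑ c_θ' f_θ'` are constant on the fibres of `T`, since the proportionality
factor `h_{xy}` cancels, so by Blackwell's theorem they are measurable functions of `T`, and hence
`ν(E | T)` is a version of `P_θ(E | T)` for all `θ ∈ Θ₀` at once. The remaining `θ` follow by
continuity in the topology of setwise convergence, in which `Θ₀` is dense as well.
-/

open Filter Topology
open scoped ENNReal NNReal

theorem exists_measurable_eq_comp_of_factorsThrough {X Y Z T' : Type*} [MeasurableSpace X]
    [MeasurableSpace Y] [StandardBorelSpace Y] [MeasurableSpace Z] [StandardBorelSpace Z]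
    [Nonempty Z] [MeasurableSpace T'] [MeasurableSpace.CountablySeparated T']
    {g : Y → X} (hg : Measurable g) (hgs : Function.Surjective g) {T : X → T'} (hT : Measurable T)
    {r : X → Z} (hr : Measurable r) (hrT : r.FactorsThrough T) :
    ∃ ρ : T' → Z, Measurable ρ ∧ r = ρ ∘ T := by
  obtain ⟨ρ₀, rfl⟩ := (Function.factorsThrough_iff r).1 hrT
  have := MeasurableSpace.Subtype.countablySeparated (s := Set.range (T ∘ g))
  have hρ₀ : Measurable (Set.domRestrict (Set.range (T ∘ g)) ρ₀) :=
    (hT.comp hg).measurable_comp_iff_restrict.1 (hr.comp hg)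
  have hmem (x : X) : T x ∈ Set.range (T ∘ g) := by
    rw [hgs.range_comp]
    exact ⟨x, rfl⟩
  exact (hρ₀.comp ((comap_measurable T).subtype_mk (h := hmem))).exists_eq_measurable_comp

section ConditionalExpectation

variable {X : Type*} {m mX : MeasurableSpace X}

theorem condExp_withDensity_ae_eq {ν : Measure X} {ρ : X → ℝ≥0∞} (hm : m ≤ mX)
    [SigmaFinite (ν.trim hm)] [IsFiniteMeasure (ν.withDensity ρ)] (hρ : Measurable[m] ρ)
    {g : X → ℝ} (hg : Integrable g ν) (hgρ : Integrable g (ν.withDensity ρ)) :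
    (ν.withDensity ρ)[g | m] =ᵐ[ν.withDensity ρ] ν[g | m] := by
  have hρX : Measurable ρ := hρ.mono hm le_rfl
  have hρ_top : ∀ᵐ x ∂ν, ρ x < ∞ := by
    refine ae_lt_top hρX ?_
    rw [← setLIntegral_univ, ← withDensity_apply _ MeasurableSet.univ]
    exact measure_ne_top _ _
  have hρg : Integrable (fun x => (ρ x).toReal * g x) ν :=
    (integrable_withDensity_iff_integrable_smul' hρX hρ_top).1 hgρ
  have pull_out : ν[fun x => (ρ x).toReal * g x | m] =ᵐ[ν] fun x => (ρ x).toReal * ν[g | m] x :=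
    condExp_mul_of_stronglyMeasurable_left hρ.ennreal_toReal.stronglyMeasurable hρg hg
  refine (ae_eq_condExp_of_forall_setIntegral_eq hm hgρ (fun A _ _ => ?_) (fun A hA _ => ?_)
    stronglyMeasurable_condExp.aestronglyMeasurable).symm
  · exact ((integrable_withDensity_iff_integrable_smul' hρX hρ_top).2
      (integrable_condExp.congr pull_out)).integrableOn
  · have setIntegral_eq (φ : X → ℝ) :
        ∫ x in A, φ x ∂ν.withDensity ρ = ∫ x in A, (ρ x).toReal * φ x ∂ν :=
      setIntegral_withDensity_eq_setIntegral_toReal_smul hρX (ae_restrict_of_ae hρ_top) φ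
        (hm A hA)
    calc ∫ x in A, (ν[g | m]) x ∂ν.withDensity ρ
        = ∫ x in A, (ρ x).toReal * (ν[g | m]) x ∂ν := setIntegral_eq _
      _ = ∫ x in A, (ν[fun x => (ρ x).toReal * g x | m]) x ∂ν :=
          (setIntegral_congr_ae₀ (hm A hA).nullMeasurableSet (pull_out.mono fun _ h _ => h)).symm
      _ = ∫ x in A, (ρ x).toReal * g x ∂ν := setIntegral_condExp hm hρg hA
      _ = ∫ x in A, g x ∂ν.withDensity ρ := (setIntegral_eq g).symm

theorem condExp_indicator_one_ae_eq_iff {P : Measure X} [IsFiniteMeasure P] (hm : m ≤ mX)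
    {E : Set X} (hE : MeasurableSet E) {k : X → ℝ} (hk : StronglyMeasurable[m] k)
    (hk_int : Integrable k P) :
    P[E.indicator (fun _ => (1 : ℝ)) | m] =ᵐ[P] k ↔
      ∀ A, MeasurableSet[m] A → ∫ x in A, k x ∂P = P.real (E ∩ A) := by
  have hE_int : Integrable (E.indicator fun _ => (1 : ℝ)) P := (integrable_const 1).indicator hE
  have setIntegral_indicator (A : Set X) :
      ∫ x in A, E.indicator (fun _ => (1 : ℝ)) x ∂P = P.real (E ∩ A) := by
    rw [integral_indicator_const _ hE, measureReal_restrict_apply hE, smul_eq_mul, mul_one]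
  refine ⟨fun h A hA => ?_, fun h => ?_⟩
  · rw [← setIntegral_indicator, ← setIntegral_condExp hm hE_int hA]
    exact integral_congr_ae (ae_restrict_of_ae h.symm)
  · refine (ae_eq_condExp_of_forall_setIntegral_eq hm hE_int (fun _ _ _ => hk_int.integrableOn)
      (fun A hA _ => ?_) hk.aestronglyMeasurable).symm
    rw [h A hA, setIntegral_indicator]

theorem condExp_indicator_one_mem_Icc {P : Measure X} [IsFiniteMeasure P] (hm : m ≤ mX)
    {E : Set X} (hE : MeasurableSet E) :
    ∀ᵐ x ∂P, P[E.indicator (fun _ => (1 : ℝ)) | m] x ∈ Set.Icc (0 : ℝ) 1 := by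
  have hE_int : Integrable (E.indicator fun _ => (1 : ℝ)) P := (integrable_const 1).indicator hE
  have nonneg : 0 ≤ᵐ[P] P[E.indicator (fun _ => (1 : ℝ)) | m] :=
    condExp_nonneg (ae_of_all _ (Set.indicator_nonneg fun _ _ => zero_le_one))
  have le_one : P[E.indicator (fun _ => (1 : ℝ)) | m] ≤ᵐ[P] P[fun _ => (1 : ℝ) | m] :=
    condExp_mono hE_int (integrable_const 1)
      (ae_of_all _ (Set.indicator_le_self' fun _ _ => zero_le_one))
  rw [condExp_const hm] at le_one
  filter_upwards [nonneg, le_one] with x h₀ h₁ using ⟨h₀, h₁⟩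

end ConditionalExpectation

section SetwiseTopology

theorem exists_simpleFunc_forall_dist_lt {X E : Type*} [MeasurableSpace X] [PseudoMetricSpace E]
    [MeasurableSpace E] [OpensMeasurableSpace E] [TopologicalSpace.SeparableSpace E] [Nonempty E]
    {φ : X → E} (hφ : Measurable φ) (hb : TotallyBounded (Set.range φ)) {ε : ℝ} (hε : 0 < ε) :
    ∃ s : SimpleFunc X E, ∀ x, dist (s x) (φ x) < ε := by
  obtain ⟨t, ht, hcover⟩ := Metric.totallyBounded_iff.1 hb (ε / 2) (half_pos hε)
  choose k hk using fun y : E =>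
    (TopologicalSpace.denseRange_denseSeq E).exists_dist_lt y (half_pos hε)
  obtain ⟨N, hN⟩ := (ht.image k).bddAbove
  refine ⟨(SimpleFunc.nearestPt (TopologicalSpace.denseSeq E) N).comp φ hφ, fun x => ?_⟩
  obtain ⟨y, hy, hxy⟩ := Set.mem_iUnion₂.1 (hcover ⟨x, rfl⟩)
  have near : edist (TopologicalSpace.denseSeq E (k y)) (φ x) < ENNReal.ofReal ε := by
    rw [edist_lt_ofReal, dist_comm]
    linarith [dist_triangle (φ x) y (TopologicalSpace.denseSeq E (k y)), hk y,
      Metric.mem_ball.1 hxy]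
  exact edist_lt_ofReal.1 ((SimpleFunc.edist_nearestPt_le _ _ (hN ⟨y, hy, rfl⟩)).trans_lt near)

variable {X : Type u} [MeasurableSpace X] {Θ : Type v}

theorem continuous_integral_of_continuous_measureReal [TopologicalSpace Θ] {P : Θ → Measure X}
    [∀ θ, IsFiniteMeasure (P θ)]
    (hP : ∀ A, MeasurableSet A → Continuous fun θ => (P θ).real A)
    {φ : X → ℝ} (hφ : Measurable φ) (hb : Bornology.IsBounded (Set.range φ)) :
    Continuous fun θ => ∫ x, φ x ∂P θ := by
  have continuous_simpleFunc (s : SimpleFunc X ℝ) : Continuous fun θ => ∫ x, s x ∂P θ := by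
    simp only [fun θ => s.integral_eq_sum (SimpleFunc.integrable_of_isFiniteMeasure (μ := P θ) s)]
    exact continuous_finsetSum _ fun c _ =>
      (hP _ (s.measurableSet_fiber c)).smul continuous_const
  refine continuous_of_locally_uniform_approx_of_continuousAt fun θ₀ u hu => ?_
  obtain ⟨ε, hε, hεu⟩ := Metric.mem_uniformity_dist.1 hu
  set M : ℝ := (P θ₀).real Set.univ + 1
  have hM : 0 < M := by positivity
  obtain ⟨s, hs⟩ := exists_simpleFunc_forall_dist_lt hφ
    (hb.isCompact_closure.totallyBounded.subset subset_closure) (div_pos hε hM)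
  refine ⟨{θ | (P θ).real Set.univ < M}, ?_, _, (continuous_simpleFunc s).continuousAt,
    fun θ hθ => hεu ?_⟩
  · exact (hP _ MeasurableSet.univ).continuousAt.eventually_lt_const (lt_add_one _)
  have hφ_int : Integrable φ (P θ) := by
    obtain ⟨C, hC⟩ := hb.exists_norm_le
    exact .of_bound hφ.aestronglyMeasurable C (ae_of_all _ fun x => hC _ ⟨x, rfl⟩)
  have hs_int : Integrable s (P θ) := SimpleFunc.integrable_of_isFiniteMeasure s
  calc dist (∫ x, φ x ∂P θ) (∫ x, s x ∂P θ)
      = ‖∫ x, (φ x - s x) ∂P θ‖ := by rw [dist_eq_norm, integral_sub hφ_int hs_int]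
    _ ≤ ε / M * (P θ).real Set.univ :=
        norm_integral_le_of_norm_le_const (ae_of_all _ fun x => by
          rw [← dist_eq_norm, dist_comm]
          exact (hs x).le)
    _ < ε / M * M := by gcongr; exact hθ
    _ = ε := div_mul_cancel₀ _ hM.ne'

theorem continuous_modelTopology_measureReal (P : Θ → Measure X) {A : Set X}
    (hA : MeasurableSet A) : Continuous[modelTopology P, inferInstance] fun θ => (P θ).real A :=
  continuous_iInf_dom (i := ⟨A, hA⟩) continuous_induced_dom

theorem tendsto_nhds_modelTopology_iff {P : Θ → Measure X} {ι : Type*} {l : Filter ι} {u : ι → Θ}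
    {θ : Θ} :
    Tendsto u l (@nhds Θ (modelTopology P) θ) ↔
      ∀ A, MeasurableSet A → Tendsto (fun i => (P (u i)).real A) l (𝓝 ((P θ).real A)) := by
  rw [modelTopology, nhds_iInf]
  simp only [tendsto_iInf, Subtype.forall, nhds_induced, tendsto_comap_iff]
  rfl

theorem abs_measureReal_sub_le_tvDist (P : Θ → Measure X) [∀ θ, IsFiniteMeasure (P θ)]
    (θ₁ θ₂ : Θ) {A : Set X} (hA : MeasurableSet A) :
    |(P θ₁).real A - (P θ₂).real A| ≤ tvDist P θ₁ θ₂ := by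
  refine le_ciSup (f := fun E : {E : Set X // MeasurableSet E} =>
    |(P θ₁).real E.1 - (P θ₂).real E.1|) ?_ ⟨A, hA⟩
  refine ⟨max ((P θ₁).real Set.univ) ((P θ₂).real Set.univ), ?_⟩
  rintro _ ⟨E, rfl⟩
  exact abs_sub_le_of_nonneg_of_le
    measureReal_nonneg ((measureReal_mono (Set.subset_univ _)).trans (le_max_left _ _))
    measureReal_nonneg ((measureReal_mono (Set.subset_univ _)).trans (le_max_right _ _))

theorem dense_modelTopology_of_tvDist {P : Θ → Measure X} [∀ θ, IsFiniteMeasure (P θ)]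
    {Θ₀ : Set Θ} (h : ∀ θ : Θ, ∀ ε : ℝ, 0 < ε → ∃ θ₀ ∈ Θ₀, tvDist P θ θ₀ < ε) :
    @Dense Θ (modelTopology P) Θ₀ := by
  let := modelTopology P
  intro θ
  choose θ' hθ' hdist using fun n : ℕ => h θ (1 / (n + 1)) Nat.one_div_pos_of_nat
  refine mem_closure_of_tendsto (b := atTop)
    (tendsto_nhds_modelTopology_iff.2 fun A hA => ?_) (Eventually.of_forall hθ')
  refine tendsto_iff_dist_tendsto_zero.2 (squeeze_zero (fun _ => dist_nonneg) (fun n => ?_)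
    tendsto_one_div_add_atTop_nhds_zero_nat)
  rw [dist_comm, Real.dist_eq]
  exact (abs_measureReal_sub_le_tvDist P θ (θ' n) hA).trans (hdist n).le

end SetwiseTopology

section Sufficiency

variable {X : Type u} [MeasurableSpace X] {Θ : Type v} {P : Θ → Measure X}
  [∀ θ, IsFiniteMeasure (P θ)] {T' : Type w} [MeasurableSpace T'] {T : X → T'}

theorem isSufficientStat_of_withDensity_comp {ν : Measure X} [IsFiniteMeasure ν]
    (hT : Measurable T) {ρ : Θ → T' → ℝ≥0∞} (hρ : ∀ θ, Measurable (ρ θ))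
    (hP : ∀ θ, P θ = ν.withDensity (ρ θ ∘ T)) : IsSufficientStat P T := by
  refine ⟨hT, fun E hE => ?_⟩
  obtain ⟨κ, hκ, hκT⟩ := Measurable.exists_eq_measurable_comp (f := T)
    (stronglyMeasurable_condExp (μ := ν) (f := E.indicator fun _ => (1 : ℝ))).measurable
  refine ⟨κ, hκ, fun θ => ?_⟩
  have : IsFiniteMeasure (ν.withDensity (ρ θ ∘ T)) := hP θ ▸ inferInstance
  rw [← hκT, hP θ]
  exact condExp_withDensity_ae_eq hT.comap_le ((hρ θ).comp (comap_measurable T))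
    ((integrable_const 1).indicator hE) ((integrable_const 1).indicator hE)

theorem IsSufficientStat.exists_condExp_ae_eq_mem_Icc (h : IsSufficientStat P T) {E : Set X}
    (hE : MeasurableSet E) :
    ∃ κ : T' → ℝ, Measurable κ ∧ (∀ t, κ t ∈ Set.Icc (0 : ℝ) 1) ∧
      ∀ θ, (P θ)[E.indicator (fun _ => (1 : ℝ)) | MeasurableSpace.comap T inferInstance]
        =ᵐ[P θ] κ ∘ T := by
  obtain ⟨κ, hκ, hκE⟩ := h.2 E hE
  refine ⟨fun t => max 0 (min 1 (κ t)), by fun_prop, fun t => by simp, fun θ => ?_⟩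
  filter_upwards [hκE θ, condExp_indicator_one_mem_Icc h.1.comap_le hE] with x hx hmem
  rw [hx] at hmem ⊢
  exact ((max_eq_right (le_min zero_le_one hmem.1)).trans (min_eq_right hmem.2)).symm

-- For bounded `κ`, the identities `∫ x in A, κ (T x) ∂P θ = P θ (E ∩ A)` that characterize `κ ∘ T`
-- are closed conditions on `θ` in the setwise topology.
theorem IsSufficientStat.of_dense {Θ₀ : Set Θ} (hΘ₀ : @Dense Θ (modelTopology P) Θ₀)
    (h : IsSufficientStat (fun θ : Θ₀ => P θ) T) : IsSufficientStat P T := by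
  let := modelTopology P
  refine ⟨h.1, fun E hE => ?_⟩
  obtain ⟨κ, hκ, hκ_mem, hκE⟩ := h.exists_condExp_ae_eq_mem_Icc hE
  have hκT_int (θ : Θ) : Integrable (κ ∘ T) (P θ) :=
    .of_mem_Icc 0 1 (hκ.comp h.1).aemeasurable (ae_of_all _ fun x => hκ_mem (T x))
  have condExp_iff (θ : Θ) := condExp_indicator_one_ae_eq_iff h.1.comap_le hE
    (hκ.comp (comap_measurable T)).stronglyMeasurable (hκT_int θ)
  refine ⟨κ, hκ, fun θ => (condExp_iff θ).2 fun A hA => ?_⟩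
  have hA' : MeasurableSet A := h.1.comap_le A hA
  have continuous_left : Continuous fun θ => ∫ x in A, (κ ∘ T) x ∂P θ := by
    simp only [← integral_indicator hA']
    refine continuous_integral_of_continuous_measureReal
      (fun _ => continuous_modelTopology_measureReal P) ((hκ.comp h.1).indicator hA')
      ((Metric.isBounded_Icc 0 1).subset ?_)
    rintro _ ⟨x, rfl⟩
    exact ⟨Set.indicator_nonneg (fun x _ => (hκ_mem (T x)).1) x,
      Set.indicator_le' (fun x _ => (hκ_mem (T x)).2) (fun _ _ => zero_le_one) x⟩
  have continuous_right : Continuous fun θ => (P θ).real (E ∩ A) :=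
    continuous_modelTopology_measureReal P (hE.inter hA')
  exact congrFun (continuous_left.ext_on hΘ₀ continuous_right fun θ₀ hθ₀ =>
    (condExp_iff θ₀).1 (hκE ⟨θ₀, hθ₀⟩) A hA) θ

end Sufficiency

theorem withDensity_withDensity_div {X : Type*} [MeasurableSpace X] {μ : Measure X}
    {F g : X → ℝ≥0∞} (hF : Measurable F) (hg : Measurable g) (hg_top : ∀ᵐ x ∂μ, g x ≠ ∞)
    (hFg : ∀ᵐ x ∂μ, g x = 0 → F x = 0) :
    (μ.withDensity g).withDensity (F / g) = μ.withDensity F := by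
  rw [← withDensity_mul _ hg (hF.div hg)]
  refine withDensity_congr_ae ?_
  filter_upwards [hg_top, hFg] with x h_top h_zero
  exact ENNReal.mul_div_cancel' h_zero (fun h => absurd h h_top)

section Mixture

variable {X : Type*} {Θ : Type*}

/-- The density `∑ c_θ f_θ` of the mixture of a countable model with weights `c`, a measure
equivalent to the model (the privileged dominating measure of Halmos and Savage) when all weights
are positive. -/
def mixtureDensity (c : Θ → ℝ≥0) (f : Θ → X → ℝ) (x : X) : ℝ≥0∞ :=
  ∑' θ, c θ * ENNReal.ofReal (f θ x)

theorem ofReal_eq_zero_of_mixtureDensity_eq_zero {c : Θ → ℝ≥0} (hc : ∀ θ, 0 < c θ)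
    {f : Θ → X → ℝ} {x : X} (h : mixtureDensity c f x = 0) (θ : Θ) :
    ENNReal.ofReal (f θ x) = 0 :=
  (mul_eq_zero.1 (ENNReal.tsum_eq_zero.1 h θ)).resolve_left (ENNReal.coe_pos.2 (hc θ)).ne'

theorem div_mixtureDensity_eq_of_mem_DSet (c : Θ → ℝ≥0) {f : Θ → X → ℝ} {x y : X}
    (hy : y ∈ DSet f x Set.univ) (θ : Θ) :
    ENNReal.ofReal (f θ y) / mixtureDensity c f y =
      ENNReal.ofReal (f θ x) / mixtureDensity c f x := by
  obtain ⟨h, hh, hfy⟩ := hy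
  have scale (θ : Θ) : ENNReal.ofReal (f θ y) = ENNReal.ofReal (f θ x) * ENNReal.ofReal h := by
    rw [hfy θ trivial, ENNReal.ofReal_mul' hh.le]
  have scale_mixture : mixtureDensity c f y = mixtureDensity c f x * ENNReal.ofReal h := by
    simp only [mixtureDensity, scale, ← mul_assoc, ENNReal.tsum_mul_right]
  rw [scale, scale_mixture]
  exact ENNReal.mul_div_mul_right _ _ (ENNReal.ofReal_pos.2 hh).ne' ENNReal.ofReal_ne_top

variable [MeasurableSpace X] [Countable Θ]

theorem measurable_mixtureDensity (c : Θ → ℝ≥0) {f : Θ → X → ℝ} (hf : ∀ θ, Measurable (f θ)) :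
    Measurable (mixtureDensity c f) :=
  .tsum fun θ => (hf θ).ennreal_ofReal.const_mul _

theorem exists_pos_lintegral_mixtureDensity_ne_top {μ : Measure X} {f : Θ → X → ℝ}
    (hf : ∀ θ, Measurable (f θ)) (hf_int : ∀ θ, ∫⁻ x, ENNReal.ofReal (f θ x) ∂μ ≠ ∞) :
    ∃ c : Θ → ℝ≥0, (∀ θ, 0 < c θ) ∧ ∫⁻ x, mixtureDensity c f x ∂μ ≠ ∞ := by
  obtain ⟨c, hc, hsum⟩ := ENNReal.exists_pos_tsum_mul_lt_of_countable one_ne_zero _ hf_int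
  refine ⟨c, hc, ne_top_of_lt (b := 1) ?_⟩
  simpa only [mixtureDensity,
    lintegral_tsum fun θ => ((hf θ).ennreal_ofReal.const_mul (c θ : ℝ≥0∞)).aemeasurable,
    lintegral_const_mul _ (hf _).ennreal_ofReal, mul_comm] using hsum

end Mixture

theorem IsDensity.lintegral_ne_top {X : Type*} [MeasurableSpace X] {P μ : Measure X}
    [IsFiniteMeasure P] {f : X → ℝ} (hf : IsDensity P μ f) :
    ∫⁻ x, ENNReal.ofReal (f x) ∂μ ≠ ∞ := by
  rw [← setLIntegral_univ, ← withDensity_apply _ MeasurableSet.univ, ← hf.2.2]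
  exact measure_ne_top P _

section ProportionalDensities

variable {X : Type u} [MeasurableSpace X] {Θ : Type v} {P : Θ → Measure X}
  [∀ θ, IsFiniteMeasure (P θ)] {μ : Measure X} {f : Θ → X → ℝ}
  {Y : Type*} [MeasurableSpace Y] [StandardBorelSpace Y] {g : Y → X}
  {T' : Type w} [MeasurableSpace T'] [MeasurableSpace.CountablySeparated T'] {T : X → T'}

theorem isSufficientStat_of_mem_DSet_of_countable [Countable Θ] (hg : Measurable g)
    (hgs : Function.Surjective g) (hT : Measurable T) (hf : ∀ θ, IsDensity (P θ) μ (f θ))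
    (hD : ∀ x y, T x = T y → y ∈ DSet f x Set.univ) : IsSufficientStat P T := by
  have hf_meas (θ : Θ) : Measurable (f θ) := (hf θ).1
  obtain ⟨c, hc, hmix_int⟩ := exists_pos_lintegral_mixtureDensity_ne_top hf_meas
    fun θ => (hf θ).lintegral_ne_top
  have hmix : Measurable (mixtureDensity c f) := measurable_mixtureDensity c hf_meas
  choose ρ hρ hρT using fun θ => exists_measurable_eq_comp_of_factorsThrough hg hgs hT
    ((hf_meas θ).ennreal_ofReal.div hmix)
    fun x y hxy => (div_mixtureDensity_eq_of_mem_DSet c (hD x y hxy) θ).symm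
  have : IsFiniteMeasure (μ.withDensity (mixtureDensity c f)) :=
    isFiniteMeasure_withDensity hmix_int
  refine isSufficientStat_of_withDensity_comp (ν := μ.withDensity (mixtureDensity c f)) hT hρ
    fun θ => ?_
  rw [← hρT θ, (hf θ).2.2]
  exact (withDensity_withDensity_div (hf_meas θ).ennreal_ofReal hmix
    ((ae_lt_top hmix hmix_int).mono fun _ => ne_of_lt)
    (ae_of_all _ fun _ h => ofReal_eq_zero_of_mixtureDensity_eq_zero hc h θ)).symm

theorem cor_4_2_general (hg : Measurable g) (hgs : Function.Surjective g) (hT : Measurable T)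
    {Θ₀ : Set Θ} (hcount : Θ₀.Countable) (hdense : @Dense Θ (modelTopology P) Θ₀)
    (hf : ∀ θ ∈ Θ₀, IsDensity (P θ) μ (f θ))
    (hD : ∀ x y, T x = T y → y ∈ DSet f x Θ₀) : IsSufficientStat P T := by
  have := hcount.to_subtype
  refine .of_dense hdense (isSufficientStat_of_mem_DSet_of_countable (f := fun θ : Θ₀ => f θ)
    hg hgs hT (fun θ => hf θ θ.2) fun x y hxy => ?_)
  obtain ⟨h, hh, hfy⟩ := hD x y hxy
  exact ⟨h, hh, fun θ _ => hfy θ θ.2⟩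

end ProportionalDensities

/-- Corollary 4.2. -/
theorem cor_4_2
    {X : Type u} [mX : MeasurableSpace X] {Θ : Type v} [Nonempty Θ]
    (P : Θ → Measure X) (hP : ∀ θ, IsProbabilityMeasure (P θ))
    (μ : Measure X) (hμ : SigmaFinite μ) (hac : ∀ θ, P θ ≪ μ)
    (hX : IsAnalyticBorel X)
    {T' : Type w} [mT : MeasurableSpace T']
    (hTcg : MeasurableSpace.CountablyGenerated T')
    (hTsing : MeasurableSingletonClass T')
    (T : X → T') (hT : Measurable T)
    (f : Θ → X → ℝ) (hf : ∀ θ, IsDensity (P θ) μ (f θ))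
    (Θ₀ : Set Θ) (hne : Θ₀.Nonempty) (hcount : Θ₀.Countable)
    (hdense : ∀ θ : Θ, ∀ ε : ℝ, 0 < ε → ∃ θ₀ ∈ Θ₀, tvDist P θ θ₀ < ε)
    (hD : ∀ x y : X, T x = T y → y ∈ DSet f x Θ₀) :
    IsSufficientStat P T := by
  obtain ⟨-, -, Y, _, _, g, hg, hgs⟩ := hX
  exact cor_4_2_general hg hgs hT hcount (dense_modelTopology_of_tvDist hdense)
    (fun θ _ => hf θ) hD
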